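/- Let Γ be a finite connected simple graph and p : Γ̃ → Γ a universal cover, with a fixed linear order on V(Γ̃). Then there exists a finite subtree T of Γ̃ such that φ(Γ,T) : G(Γ) → G(T) is a quasi-isometric group embedding with respect to the word metrics. -/

import Mathlib

/-!
The tree `T` is a ball in the universal cover, so large that it contains, for each vertex `v` of
`Γ`, the ball of radius `|V(Γ)|` around some lift of `v`.  The point is that then
`‖φ g‖ ≥ ‖g‖`; together with the trivial bound `‖φ g‖ ≤ |T| ‖g‖` this gives the theorem, and
it also gives injectivity.

For a vertex `x` of a graph `Δ`, let `A_x` (`coStar`) be the subgroup of `G(Δ)` generated by the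
vertices other than `x` that are not adjacent to `x`.  Sending `x` to the stable letter and the
other vertices to themselves defines a homomorphism `ψ_x` (`psi`) from `G(Δ)` to the HNN extension
of `G(Δ)` along the identity of `A_x`.  By Britton's lemma, if a word contains no subword
`x^{±1} u x^{∓1}`, with `u` free of `x` and representing an element of `A_x`, then the number of
letters `x^{±1}` in it depends only on the group element.  Words of minimal length have this
property for all `x` (`reduced_notMem_coStar`).

It remains to see that for `w` of minimal length in `G(Γ)` and a lift `x` of `v` deep inside `T`,
the word obtained from `w` by substituting lifts has this property at `x`
(`phi_notMem_coStar`).  Otherwise `w` has a subword `v^{±1} u v^{∓1}` with `u` free of `v` and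
`φ u ∈ A_x`.  By minimality `u` contains a letter `v₁` adjacent to `v`; let `x₁` be the lift of
`v₁` adjacent to `x`.  As `x₁` is not among the generators of `A_x`, `ψ_{x₁}` maps `φ u` to the base
group, so by Britton's lemma `u` has a subword `v₁^{±1} u₁ v₁^{∓1}` with `u₁` free of `v₁` and
`φ u₁ ∈ A_{x₁}`.  Since `u₁` involves fewer vertices than `u`, the descent ends after at most
`|V(Γ)|` steps, all taken inside `T`.

Consequently a minimal word for `φ w` contains the chosen lift of `v` exactly as often as `w`
contains `v` (`count_eq`), and summing over `v` gives `‖φ w‖ ≥ ‖w‖`.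
-/


/-! Right-angled Artin groups in the "opposite" convention:
generators are vertices, and two generators commute iff the vertices are NOT adjacent. -/

/-- The commutation relators for the right-angled Artin group (opposite convention):
one commutator for each pair of distinct non-adjacent vertices. -/
def raagRels {V : Type*} (Γ : SimpleGraph V) : Set (FreeGroup V) :=
  {r | ∃ u v : V, u ≠ v ∧ ¬ Γ.Adj u v ∧
    r = FreeGroup.of u * FreeGroup.of v * (FreeGroup.of u)⁻¹ * (FreeGroup.of v)⁻¹}

/-- The right-angled Artin group `G(Γ)` (opposite convention). -/
abbrev Raag {V : Type*} (Γ : SimpleGraph V) : Type _ := PresentedGroup (raagRels Γ)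

/-- The vertex generators of `G(Γ)`. -/
abbrev Raag.of {V : Type*} (Γ : SimpleGraph V) (v : V) : Raag Γ := PresentedGroup.of v

/-- The element of `G(Γ)` represented by a word: a list of letters, where the letter `(v, b)`
stands for `v` if `b = true` and for `v⁻¹` if `b = false`. -/
def wordProd {V : Type*} (Γ : SimpleGraph V) (w : List (V × Bool)) : Raag Γ :=
  (w.map fun l => if l.2 then Raag.of Γ l.1 else (Raag.of Γ l.1)⁻¹).prod

/-- A word is reduced if no shorter word represents the same element of `G(Γ)`. -/
def IsReducedWord {V : Type*} (Γ : SimpleGraph V) (w : List (V × Bool)) : Prop :=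
  ∀ w' : List (V × Bool), wordProd Γ w' = wordProd Γ w → w.length ≤ w'.length

/-- The word length of `g` with respect to a generating set `S` of a group:
the least length of a list of elements of `S ∪ S⁻¹` whose product is `g`. -/
noncomputable def wordLength {G : Type*} [Group G] (S : Set G) (g : G) : ℕ :=
  sInf {n | ∃ l : List G, (∀ x ∈ l, x ∈ S ∨ x⁻¹ ∈ S) ∧ l.prod = g ∧ l.length = n}

/-- The (right-invariant) word metric associated to a generating set. -/
noncomputable def wordDist {G : Type*} [Group G] (S : Set G) (x y : G) : ℝ :=
  (wordLength S (y * x⁻¹) : ℝ)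

/-- Word length in `G(Γ)` with respect to the vertex generating set. -/
noncomputable def raagNorm {V : Type*} (Γ : SimpleGraph V) (g : Raag Γ) : ℕ :=
  wordLength (Set.range (Raag.of Γ)) g

/-- The word metric on `G(Γ)` with respect to the vertex generating set. -/
noncomputable def raagDist {V : Type*} (Γ : SimpleGraph V) (x y : Raag Γ) : ℝ :=
  wordDist (Set.range (Raag.of Γ)) x y

/-- A quasi-isometric group embedding: an injective group homomorphism which
is a quasi-isometric embedding with respect to the given metrics. -/
def IsQIEmbedding {G H : Type*} [Group G] [Group H] (f : G →* H)
    (dG : G → G → ℝ) (dH : H → H → ℝ) : Prop :=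
  Function.Injective f ∧ ∃ C : ℝ, 1 ≤ C ∧ ∀ x y : G,
    dG x y / C - C ≤ dH (f x) (f y) ∧ dH (f x) (f y) ≤ C * dG x y + C

/-- The support of `g ∈ G(Γ)`: vertices occurring in some reduced word representing `g`. -/
def raagSupp {V : Type*} (Γ : SimpleGraph V) (g : Raag Γ) : Set V :=
  {v | ∃ w : List (V × Bool), IsReducedWord Γ w ∧ wordProd Γ w = g ∧ ∃ b, (v, b) ∈ w}

/-- A cancellation of the vertex `v` in the word `w`: a subword `v^{±1} w' v^{∓1}` where the
support of the element represented by `w'` is disjoint from the link of `v`. -/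
def HasCancellationOf {V : Type*} (Γ : SimpleGraph V) (w : List (V × Bool)) (v : V) : Prop :=
  ∃ (w₁ w' w₂ : List (V × Bool)) (b : Bool),
    w = w₁ ++ (v, b) :: (w' ++ (v, !b) :: w₂) ∧
    ∀ u ∈ raagSupp Γ (wordProd Γ w'), ¬ Γ.Adj v u

/-- An innermost cancellation of the vertex `v` in the word `w`: a cancellation
`v^{±1} w' v^{∓1}` in which moreover no letter of `w'` involves `v`. -/
def HasInnermostCancellationOf {V : Type*} (Γ : SimpleGraph V) (w : List (V × Bool)) (v : V) :
    Prop :=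
  ∃ (w₁ w' w₂ : List (V × Bool)) (b : Bool),
    w = w₁ ++ (v, b) :: (w' ++ (v, !b) :: w₂) ∧
    (∀ u ∈ raagSupp Γ (wordProd Γ w'), ¬ Γ.Adj v u) ∧
    ∀ b' : Bool, (v, b') ∉ w'

/-- A covering of simple graphs: a graph homomorphism which is bijective on neighbor sets. -/
structure IsGraphCovering {V' V : Type*} (Γ' : SimpleGraph V') (Γ : SimpleGraph V)
    (p : V' → V) : Prop where
  adj : ∀ {x y : V'}, Γ'.Adj x y → Γ.Adj (p x) (p y)
  bijOn : ∀ x : V', Set.BijOn p (Γ'.neighborSet x) (Γ.neighborSet (p x))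

/-- A universal cover of a connected graph `Γ`: a covering whose total graph is a tree. -/
def IsUniversalCover {V' V : Type*} (Γ' : SimpleGraph V') (Γ : SimpleGraph V)
    (p : V' → V) : Prop :=
  IsGraphCovering Γ' Γ p ∧ Γ'.IsTree

section Phi

variable {V' V : Type*} [LinearOrder V'] [DecidableEq V]

/-- The lifts in `T` of a vertex `v`, listed in increasing order. -/
def liftVerts (p : V' → V) (T : Finset V') (v : V) : List V' :=
  (T.filter fun t => p t = v).sort (· ≤ ·)

/-- The lifts in `T` of a vertex `v`, in increasing order, as vertices of the induced subgraph. -/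
def liftSubVerts (p : V' → V) (T : Finset V') (v : V) : List (↥(T : Set V')) :=
  (liftVerts p T v).pmap (fun t ht => (⟨t, ht⟩ : ↥(T : Set V')))
    (fun t ht => by
      have : t ∈ T := (Finset.mem_filter.mp ((Finset.mem_sort _).mp ht)).1
      exact Finset.mem_coe.mpr this)

/-- `φ(Γ,T)` sends each vertex `v` of `Γ` to the product, in increasing order,
of the lifts of `v` lying in `T`.  This predicate singles out the homomorphism `φ(Γ,T)`. -/
def IsPhi (Γ : SimpleGraph V) (Γ' : SimpleGraph V') (p : V' → V) (T : Finset V')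
    (φ : Raag Γ →* Raag (Γ'.induce (T : Set V'))) : Prop :=
  ∀ v : V, φ (Raag.of Γ v) =
    ((liftSubVerts p T v).map (Raag.of (Γ'.induce (T : Set V')))).prod

/-- The `φ(Γ,T)`-homomorphic word of a word `w`: each letter `x^{e}` of `w` is replaced by the
word `(t₁ t₂ ⋯ t_k)^{e}` where `t₁ < t₂ < ⋯ < t_k` are the lifts of `x` lying in `T`. -/
def homWord (p : V' → V) (T : Finset V') (w : List (V × Bool)) :
    List (↥(T : Set V') × Bool) :=
  w.flatMap fun l =>
    if l.2 then (liftSubVerts p T l.1).map (fun t => (t, true))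
    else ((liftSubVerts p T l.1).reverse).map (fun t => (t, false))

/-- `φ(Γ,T)` is `F`-surviving: for every reduced word `w` in `G(Γ)` and every `v ∈ F`, the
`φ(Γ,T)`-homomorphic word of `w` has no cancellation of `v`. -/
def IsSurviving (Γ : SimpleGraph V) (Γ' : SimpleGraph V') (p : V' → V) (T : Finset V')
    (F : Set V') : Prop :=
  ∀ w : List (V × Bool), IsReducedWord Γ w →
    ∀ (v : V') (hv : v ∈ (T : Set V')), v ∈ F →
      ¬ HasCancellationOf (Γ'.induce (T : Set V')) (homWord p T w) ⟨v, hv⟩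

end Phi

namespace RaagTree

open HNNExtension

/-! ### Words and minimal length -/

section Words

variable {V : Type*} (Γ : SimpleGraph V)

@[simp] lemma wordProd_nil : wordProd Γ [] = 1 := by simp [wordProd]

@[simp] lemma wordProd_cons (l : V × Bool) (w : List (V × Bool)) :
    wordProd Γ (l :: w) =
      (if l.2 then Raag.of Γ l.1 else (Raag.of Γ l.1)⁻¹) * wordProd Γ w := by
  simp [wordProd]

@[simp] lemma wordProd_append (w₁ w₂ : List (V × Bool)) :
    wordProd Γ (w₁ ++ w₂) = wordProd Γ w₁ * wordProd Γ w₂ := by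
  simp [wordProd]

lemma exists_wordProd_eq (g : Raag Γ) : ∃ w, wordProd Γ w = g := by
  induction g using PresentedGroup.induction_on with
  | _ z =>
    obtain ⟨w₀, rfl⟩ := Quot.exists_rep z
    refine ⟨w₀, ?_⟩
    have h : ∀ w : List (V × Bool),
        wordProd Γ w = PresentedGroup.mk (raagRels Γ) (FreeGroup.mk w) := by
      intro w
      induction w with
      | nil => simp [← FreeGroup.one_eq_mk]
      | cons l w ih =>
        rw [wordProd_cons, ih, ← List.singleton_append, ← FreeGroup.mul_mk, map_mul]
        congr 1
        rcases l with ⟨v, _ | _⟩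
        · have : (FreeGroup.mk [(v, false)]) = (FreeGroup.of v)⁻¹ := by
            simp [FreeGroup.of, FreeGroup.inv_mk, FreeGroup.invRev]
          rw [this, map_inv]
          rfl
        · rfl
    exact h w₀

lemma raagNorm_le_length (w : List (V × Bool)) : raagNorm Γ (wordProd Γ w) ≤ w.length := by
  refine Nat.sInf_le ⟨w.map fun l => if l.2 then Raag.of Γ l.1 else (Raag.of Γ l.1)⁻¹,
    ?_, rfl, by simp⟩
  intro x hx
  obtain ⟨⟨v, b⟩, -, rfl⟩ := List.mem_map.1 hx
  cases b
  · right; exact ⟨v, by simp⟩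
  · left; exact ⟨v, by simp⟩

lemma exists_word_of_list (l : List (Raag Γ))
    (hl : ∀ x ∈ l, x ∈ Set.range (Raag.of Γ) ∨ x⁻¹ ∈ Set.range (Raag.of Γ)) :
    ∃ w, wordProd Γ w = l.prod ∧ w.length = l.length := by
  induction l with
  | nil => exact ⟨[], by simp⟩
  | cons a l ih =>
    obtain ⟨w, hw, hlen⟩ := ih fun x hx => hl x (List.mem_cons_of_mem _ hx)
    rcases hl a List.mem_cons_self with ⟨v, hv⟩ | ⟨v, hv⟩
    · exact ⟨(v, true) :: w, by simp [hw, ← hv], by simp [hlen]⟩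
    · have : a = (Raag.of Γ v)⁻¹ := by rw [hv, inv_inv]
      exact ⟨(v, false) :: w, by simp [hw, this], by simp [hlen]⟩

lemma exists_reduced_word (g : Raag Γ) :
    ∃ w, wordProd Γ w = g ∧ w.length = raagNorm Γ g ∧ IsReducedWord Γ w := by
  have hne : {n | ∃ l : List (Raag Γ),
      (∀ x ∈ l, x ∈ Set.range (Raag.of Γ) ∨ x⁻¹ ∈ Set.range (Raag.of Γ)) ∧
        l.prod = g ∧ l.length = n}.Nonempty := by
    obtain ⟨w, rfl⟩ := exists_wordProd_eq Γ g
    refine ⟨w.length, w.map fun l => if l.2 then Raag.of Γ l.1 else (Raag.of Γ l.1)⁻¹,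
      ?_, rfl, by simp⟩
    intro x hx
    obtain ⟨⟨v, b⟩, -, rfl⟩ := List.mem_map.1 hx
    cases b
    · right; exact ⟨v, by simp⟩
    · left; exact ⟨v, by simp⟩
  obtain ⟨l, hl, hprod, hlen⟩ := Nat.sInf_mem hne
  obtain ⟨w, hw, hwl⟩ := exists_word_of_list Γ l hl
  have hn : w.length = raagNorm Γ g := hwl.trans hlen
  refine ⟨w, hw.trans hprod, hn, fun w' hw' => ?_⟩
  rw [hn, ← hprod, ← hw, ← hw']
  exact raagNorm_le_length Γ w'

variable {Γ}

lemma reduced_of_subword {w₁ w w₂ : List (V × Bool)}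
    (h : IsReducedWord Γ (w₁ ++ (w ++ w₂))) : IsReducedWord Γ w := by
  intro w' hw'
  have := h (w₁ ++ (w' ++ w₂)) (by simp [hw'])
  simp only [List.length_append] at this
  omega

lemma of_commute {u v : V} (h : ¬ Γ.Adj u v) : Commute (Raag.of Γ u) (Raag.of Γ v) := by
  by_cases huv : u = v
  · subst huv; exact Commute.refl _
  have : PresentedGroup.mk (raagRels Γ)
      (FreeGroup.of u * FreeGroup.of v * (FreeGroup.of u)⁻¹ * (FreeGroup.of v)⁻¹) = 1 :=
    PresentedGroup.one_of_mem ⟨u, v, huv, h, rfl⟩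
  simp only [map_mul, map_inv] at this
  exact mul_inv_eq_iff_eq_mul.1 (mul_inv_eq_one.1 this)

/-- A map from the vertices of `Γ` to a group that sends distinct non-adjacent vertices to
commuting elements extends to `G(Γ)`. -/
def raagLift {H : Type*} [Group H] (f : V → H)
    (hf : ∀ u v, u ≠ v → ¬ Γ.Adj u v → Commute (f u) (f v)) : Raag Γ →* H :=
  PresentedGroup.toGroup (f := f) (by
    rintro _ ⟨u, v, huv, h, rfl⟩
    simp only [map_mul, map_inv, FreeGroup.lift_apply_of]
    rw [(hf u v huv h).eq]
    group)

@[simp] lemma raagLift_of {H : Type*} [Group H] (f : V → H)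
    (hf : ∀ u v, u ≠ v → ¬ Γ.Adj u v → Commute (f u) (f v)) (v : V) :
    raagLift f hf (Raag.of Γ v) = f v :=
  PresentedGroup.toGroup.of _

variable (Γ) in
/-- The subgroup `A_x` of `G(Γ)` generated by the vertices different from `x` and not adjacent
to `x`. -/
def coStar (x : V) : Subgroup (Raag Γ) :=
  Subgroup.closure (Raag.of Γ '' {y | y ≠ x ∧ ¬ Γ.Adj x y})

lemma of_mem_coStar {x y : V} (h : y ≠ x) (h' : ¬ Γ.Adj x y) : Raag.of Γ y ∈ coStar Γ x :=
  Subgroup.subset_closure ⟨y, ⟨h, h'⟩, rfl⟩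

lemma commute_coStar {x : V} {a : Raag Γ} (ha : a ∈ coStar Γ x) :
    Commute (Raag.of Γ x) a := by
  induction ha using Subgroup.closure_induction with
  | mem a h => obtain ⟨y, ⟨-, h⟩, rfl⟩ := h; exact of_commute h
  | one => exact Commute.one_right _
  | mul a b _ _ ha hb => exact ha.mul_right hb
  | inv a _ ha => exact ha.inv_right

lemma wordProd_mem_coStar {x : V} {u : List (V × Bool)}
    (h : ∀ l ∈ u, l.1 ≠ x ∧ ¬ Γ.Adj x l.1) : wordProd Γ u ∈ coStar Γ x := by
  induction u with
  | nil => simp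
  | cons l u ih =>
    rw [wordProd_cons]
    refine mul_mem ?_ (ih fun l' hl' => h l' (List.mem_cons_of_mem _ hl'))
    have := h l List.mem_cons_self
    have := of_mem_coStar this.1 this.2
    split_ifs
    · exact this
    · exact inv_mem this

/-- A word of minimal length contains no subword `x^{±1} u x^{∓1}` with `u` representing an
element of `A_x`: the two letters could be deleted. -/
lemma reduced_notMem_coStar {x : V} {b : Bool} {w₁ u w₂ : List (V × Bool)}
    (h : IsReducedWord Γ (w₁ ++ (x, b) :: (u ++ (x, !b) :: w₂))) :
    wordProd Γ u ∉ coStar Γ x := by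
  intro hu
  have hc := commute_coStar hu
  have := h (w₁ ++ (u ++ w₂)) (by
    simp only [wordProd_append, wordProd_cons]
    cases b
    · simp [← mul_assoc, (hc.inv_left).eq]
    · simp [← mul_assoc, hc.eq])
  simp only [List.length_append, List.length_cons] at this
  omega

/-- In a word of minimal length, between two occurrences of `x` with opposite signs
there is a letter adjacent to `x`. -/
lemma exists_adj_of_reduced {x : V} {b : Bool} {w₁ u w₂ : List (V × Bool)}
    (h : IsReducedWord Γ (w₁ ++ (x, b) :: (u ++ (x, !b) :: w₂))) (hx : ∀ l ∈ u, l.1 ≠ x) :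
    ∃ l ∈ u, Γ.Adj x l.1 := by
  by_contra! hcon
  exact reduced_notMem_coStar h (wordProd_mem_coStar fun l hl => ⟨hx l hl, hcon l hl⟩)

end Words

/-! ### Britton's lemma for right-angled Artin groups -/

section Britton

variable {V : Type*} [DecidableEq V] {Γ : SimpleGraph V}

/-- Every word can be cut at its letters `x^{±1}`, leaving an initial piece and one piece after
each such letter, all free of `x`. -/
lemma exists_split (x : V) (w : List (V × Bool)) :
    ∃ (u₀ : List (V × Bool)) (L : List (Bool × List (V × Bool))),
      w = u₀ ++ L.flatMap (fun a => (x, a.1) :: a.2) ∧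
      (∀ l ∈ u₀, l.1 ≠ x) ∧ ∀ a ∈ L, ∀ l ∈ a.2, l.1 ≠ x := by
  induction w with
  | nil => exact ⟨[], [], by simp⟩
  | cons l w ih =>
    obtain ⟨u₀, L, rfl, h₀, hL⟩ := ih
    rcases l with ⟨y, b⟩
    by_cases hy : y = x
    · subst hy
      exact ⟨[], (b, u₀) :: L, by simp, by simp, 
        List.forall_mem_cons.2 ⟨h₀, hL⟩⟩
    · exact ⟨(y, b) :: u₀, L, by simp, List.forall_mem_cons.2 ⟨hy, h₀⟩, hL⟩

/-- The sign of a letter, as the exponent of the stable letter. -/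
def sgn (b : Bool) : ℤˣ := if b then 1 else -1

lemma sgn_injective : Function.Injective sgn := by decide

/-- Let `θ` be a homomorphism to the HNN extension of `K` along the identity of `A ≤ K`, sending
`x` to `t * r` with `r ∈ A`, and agreeing with `f` on the other vertices.  If no innermost
subword `x^{±1} u x^{∓1}` of `w` has `f u ∈ A`, then the image of `w` is spelled by a
reduced word in the sense of Britton with one stable letter for each letter `x` in `w`. -/
lemma exists_hnn_word {K : Type*} [Group K] {A : Subgroup K}
    (θ : Raag Γ →* HNNExtension K A A (MulEquiv.refl A)) (f : Raag Γ →* K) (x : V) (r : K)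
    (hr : r ∈ A) (hx : θ (Raag.of Γ x) = t * of r)
    (hy : ∀ y, y ≠ x → θ (Raag.of Γ y) = of (f (Raag.of Γ y)))
    (w : List (V × Bool))
    (hw : ∀ w₁ u w₂ b, w = w₁ ++ (x, b) :: (u ++ (x, !b) :: w₂) → (∀ l ∈ u, l.1 ≠ x) →
      f (wordProd Γ u) ∉ A) :
    ∃ ρ : NormalWord.ReducedWord K A A,
      ρ.prod (MulEquiv.refl A) = θ (wordProd Γ w) ∧
      ρ.toList.length = (w.map Prod.fst).count x := by
  obtain ⟨u₀, L, rfl, h₀, hL⟩ := exists_split x w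
  have hfree : ∀ u : List (V × Bool), (∀ l ∈ u, l.1 ≠ x) →
      θ (wordProd Γ u) = of (f (wordProd Γ u)) := by
    intro u hu
    induction u with
    | nil => simp
    | cons l u ih =>
      have := hy l.1 (hu l List.mem_cons_self)
      rw [wordProd_cons, map_mul, map_mul, map_mul,
        ih fun l' hl' => hu l' (List.mem_cons_of_mem _ hl')]
      split_ifs <;> simp [this]
  have hcount : ∀ u : List (V × Bool), (∀ l ∈ u, l.1 ≠ x) →
      (u.map Prod.fst).count x = 0 := by
    intro u hu
    rw [List.count_eq_zero]
    intro hmem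
    obtain ⟨l, hl, hlx⟩ := List.mem_map.1 hmem
    exact hu l hl hlx
  have hcomm : (of r : HNNExtension K A A (MulEquiv.refl A)) * t = t * of r :=
    (t_mul_of (φ := MulEquiv.refl A) ⟨r, hr⟩).symm
  have hletter : ∀ b : Bool,
      θ (if b then Raag.of Γ x else (Raag.of Γ x)⁻¹) =
        t ^ ((sgn b : ℤˣ) : ℤ) * of (r ^ ((sgn b : ℤˣ) : ℤ)) := by
    intro b
    cases b
    · simp only [Bool.false_eq_true, if_false, map_inv, hx, sgn, Units.val_neg, Units.val_one,
        zpow_neg, zpow_one]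
      rw [← hcomm, mul_inv_rev]
    · simp [sgn, hx]
  refine ⟨⟨f (wordProd Γ u₀),
    L.map fun a => (sgn a.1, r ^ ((sgn a.1 : ℤˣ) : ℤ) * f (wordProd Γ a.2)), ?_⟩, ?_, ?_⟩
  · rw [List.isChain_map, List.isChain_iff_forall_rel_of_append_cons_cons]
    rintro ⟨b, u⟩ ⟨b', u'⟩ l₁ l₂ rfl hmem
    by_contra hne
    have hb : b' = !b := by
      have : b ≠ b' := fun h => hne (by simp [h])
      cases b <;> cases b' <;> simp_all
    subst hb
    refine hw (u₀ ++ l₁.flatMap fun a => (x, a.1) :: a.2) u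
      (u' ++ l₂.flatMap fun a => (x, a.1) :: a.2) b (by simp) (hL (b, u) (by simp)) ?_
    have hA : toSubgroup A A (sgn b) = A := by cases b <;> rfl
    simp only [hA] at hmem
    exact (Subgroup.mul_mem_cancel_left _ (zpow_mem hr _)).1 hmem
  · simp only [NormalWord.ReducedWord.prod, wordProd_append, map_mul, hfree u₀ h₀]
    congr 1
    clear hw
    induction L with
    | nil => simp
    | cons a L ih =>
      simp only [List.map_cons, List.prod_cons, List.flatMap_cons, wordProd_append, wordProd_cons,
        map_mul, List.cons_append, hletter, hfree a.2 (hL a List.mem_cons_self)]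
      rw [ih fun a' ha' => hL a' (List.mem_cons_of_mem _ ha')]
      simp only [mul_assoc]
  · rw [List.map_append, List.count_append, hcount u₀ h₀, zero_add, List.length_map]
    clear hw
    induction L with
    | nil => simp
    | cons a L ih =>
      simp only [List.flatMap_cons, List.map_append, List.map_cons, List.cons_append,
        List.count_cons_self, List.count_append, List.length_cons]
      rw [hcount a.2 (hL a List.mem_cons_self),
        ← ih fun a' ha' => hL a' (List.mem_cons_of_mem _ ha')]
      omega

/-- The homomorphism from `G(Γ)` to the HNN extension of `G(Γ)` along the identity of `A_x` that
sends `x` to the stable letter and every other vertex to its copy in the base group. -/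
noncomputable def psi (Γ : SimpleGraph V) (x : V) :
    Raag Γ →* HNNExtension (Raag Γ) (coStar Γ x) (coStar Γ x) (MulEquiv.refl _) :=
  raagLift (fun y => if y = x then t else of (Raag.of Γ y)) (by
    have key : ∀ y, y ≠ x → ¬ Γ.Adj x y → Commute
        (t : HNNExtension (Raag Γ) (coStar Γ x) (coStar Γ x) (MulEquiv.refl _))
        (of (Raag.of Γ y)) := fun y h h' =>
      t_mul_of (φ := MulEquiv.refl (coStar Γ x)) ⟨_, of_mem_coStar h h'⟩
    intro u v huv h
    split_ifs with h1 h2 h2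
    · exact absurd (h1.trans h2.symm) huv
    · subst h1; exact key v h2 h
    · subst h2; exact (key u h1 fun h' => h h'.symm).symm
    · exact (of_commute h).map of)

lemma psi_self (x : V) : psi Γ x (Raag.of Γ x) = t := by simp [psi]

lemma psi_ne {x y : V} (h : y ≠ x) : psi Γ x (Raag.of Γ y) = of (Raag.of Γ y) := by
  simp [psi, h]

lemma psi_of_closure {x : V} {s : Set V} (hs : x ∉ s) {a : Raag Γ}
    (ha : a ∈ Subgroup.closure (Raag.of Γ '' s)) : psi Γ x a = of a := by
  induction ha using Subgroup.closure_induction with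
  | mem a h =>
    obtain ⟨y, h, rfl⟩ := h
    exact psi_ne fun h' => hs (h' ▸ h)
  | one => simp
  | mul a b _ _ ha hb => simp [ha, hb]
  | inv a _ ha => simp [ha]

lemma psi_prod_of_notMem {x : V} {L : List V} (h : x ∉ L) :
    psi Γ x (L.map (Raag.of Γ)).prod = of (L.map (Raag.of Γ)).prod := by
  refine psi_of_closure (s := {y | y ∈ L}) h (Subgroup.list_prod_mem _ ?_)
  intro a ha
  obtain ⟨y, hy, rfl⟩ := List.mem_map.1 ha
  exact Subgroup.subset_closure ⟨y, hy, rfl⟩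

/-- A product of distinct vertices that include `x` and are not adjacent to `x` is mapped by `ψ_x`
to the stable letter times an element of `A_x`: the factors before `x` commute past the
stable letter. -/
lemma psi_prod_of_mem {x : V} {L : List V} (hnd : L.Nodup) (h : x ∈ L)
    (hadj : ∀ y ∈ L, ¬ Γ.Adj x y) :
    ∃ r ∈ coStar Γ x, psi Γ x (L.map (Raag.of Γ)).prod = t * of r := by
  obtain ⟨l₁, l₂, rfl⟩ := List.append_of_mem h
  have hmem : ∀ l : List V, x ∉ l → (∀ y ∈ l, ¬ Γ.Adj x y) →
      (l.map (Raag.of Γ)).prod ∈ coStar Γ x := by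
    intro l hl hl'
    refine Subgroup.list_prod_mem _ ?_
    intro a ha
    obtain ⟨y, hy, rfl⟩ := List.mem_map.1 ha
    exact of_mem_coStar (fun h => hl (h ▸ hy)) (hl' y hy)
  have h12 : x ∉ l₁ ∧ x ∉ l₂ := by
    rw [List.nodup_middle, List.nodup_cons] at hnd
    simpa using hnd.1
  have h1 := hmem l₁ h12.1 fun y hy => hadj y (by simp [hy])
  have h2 := hmem l₂ h12.2 fun y hy => hadj y (by simp [hy])
  refine ⟨_, mul_mem h1 h2, ?_⟩
  rw [List.map_append, List.map_cons, List.prod_append, List.prod_cons, map_mul, map_mul,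
    psi_self, psi_prod_of_notMem h12.1, psi_prod_of_notMem h12.2, map_mul, ← mul_assoc,
    ← mul_assoc]
  congr 1
  exact (t_mul_of (φ := MulEquiv.refl (coStar Γ x)) ⟨_, h1⟩).symm

end Britton

/-! ### The homomorphism `φ(Γ,T)` -/

section Phi

variable {V' V : Type*} [LinearOrder V'] [DecidableEq V] {Γ : SimpleGraph V}
  {Γ' : SimpleGraph V'} {p : V' → V} {T : Finset V'}

lemma mem_liftSubVerts {v : V} {t : ↥(T : Set V')} :
    t ∈ liftSubVerts p T v ↔ p t = v := by
  rcases t with ⟨t, ht⟩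
  simp [liftSubVerts, liftVerts, List.mem_pmap] at ht ⊢
  tauto

lemma nodup_liftSubVerts (v : V) : (liftSubVerts p T v).Nodup :=
  (Finset.sort_nodup _ _).pmap fun _ _ _ _ h => congrArg Subtype.val h

lemma length_liftSubVerts_le (v : V) : (liftSubVerts p T v).length ≤ T.card := by
  simpa [liftSubVerts, liftVerts] using Finset.card_filter_le T _

lemma exists_isPhi (hp : IsGraphCovering Γ' Γ p) (T : Finset V') :
    ∃ φ : Raag Γ →* Raag (Γ'.induce (T : Set V')), IsPhi Γ Γ' p T φ := by
  refine ⟨raagLift (fun v => ((liftSubVerts p T v).map (Raag.of (Γ'.induce (T : Set V')))).prod)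
    ?_, fun v => raagLift_of _ _ v⟩
  intro u v _ h
  refine Commute.list_prod_left _ _ fun a ha => Commute.list_prod_right _ _ fun b hb => ?_
  obtain ⟨x, hx, rfl⟩ := List.mem_map.1 ha
  obtain ⟨y, hy, rfl⟩ := List.mem_map.1 hb
  rw [mem_liftSubVerts] at hx hy
  refine of_commute fun hadj => h ?_
  have := hp.adj (show Γ'.Adj x.1 y.1 from hadj)
  rwa [hx, hy] at this

variable {φ : Raag Γ →* Raag (Γ'.induce (T : Set V'))}

lemma psi_phi_self (hp : IsGraphCovering Γ' Γ p) (hφ : IsPhi Γ Γ' p T φ) (x : ↥(T : Set V')) :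
    ∃ r ∈ coStar (Γ'.induce (T : Set V')) x,
      psi (Γ'.induce (T : Set V')) x (φ (Raag.of Γ (p x))) = t * of r := by
  rw [hφ]
  refine psi_prod_of_mem (nodup_liftSubVerts _) (mem_liftSubVerts.2 rfl) fun y hy hadj => ?_
  have := hp.adj (show Γ'.Adj x.1 y.1 from hadj)
  rw [mem_liftSubVerts.1 hy] at this
  exact Γ.irrefl this

lemma psi_phi_ne (hφ : IsPhi Γ Γ' p T φ) (x : ↥(T : Set V')) (v : V) (h : v ≠ p x) :
    psi (Γ'.induce (T : Set V')) x (φ (Raag.of Γ v)) = of (φ (Raag.of Γ v)) := by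
  rw [hφ]
  exact psi_prod_of_notMem fun hx => h (mem_liftSubVerts.1 hx).symm

/-- If `v^{±1} u v^{∓1}` has minimal length, `u` does not involve `v`, and `T` contains the
ball of radius `N` around a lift `x` of `v`, where `u` involves at most `N` vertices, then
`φ u ∉ A_x`.  This is the descent: passing to a subword of `u` loses at least one vertex, and passing
to a neighbour of `x` costs one unit of radius. -/
lemma phi_notMem_coStar (hp : IsGraphCovering Γ' Γ p) (hc : Γ'.Connected)
    (hφ : IsPhi Γ Γ' p T φ) (N : ℕ) :
    ∀ (u : List (V × Bool)) (b : Bool) (x : ↥(T : Set V')),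
      (u.map Prod.fst).toFinset.card ≤ N →
      (∀ y, Γ'.dist x y ≤ N → y ∈ T) →
      IsReducedWord Γ ((p x, b) :: (u ++ [(p x, !b)])) →
      (∀ l ∈ u, l.1 ≠ p x) →
      φ (wordProd Γ u) ∉ coStar (Γ'.induce (T : Set V')) x := by
  induction N with
  | zero =>
    intro u b x hN _ hred hfree _
    obtain ⟨l, hl, -⟩ := exists_adj_of_reduced (w₁ := []) hred hfree
    have : l.1 ∈ (u.map Prod.fst).toFinset := by
      rw [List.mem_toFinset]; exact List.mem_map_of_mem hl
    rw [Finset.card_eq_zero.1 (Nat.le_zero.1 hN)] at this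
    simp at this
  | succ N ih =>
    intro u b x hN hball hred hfree hmem
    obtain ⟨l, hl, hadj⟩ := exists_adj_of_reduced (w₁ := []) hred hfree
    -- lift the edge from `p x` to `l.1` to an edge of `T` starting at `x`
    obtain ⟨y, hxy, hpy⟩ := (hp.bijOn x).surjOn hadj
    have hxy : Γ'.Adj x y := hxy
    have hd : Γ'.dist x y = 1 := SimpleGraph.dist_eq_one_iff_adj.2 hxy
    have hyT : y ∈ T := hball y (by omega)
    obtain ⟨r, hr, hry⟩ := psi_phi_self hp hφ ⟨y, hyT⟩
    have hlu : l.1 ∈ (u.map Prod.fst).toFinset := by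
      rw [List.mem_toFinset]; exact List.mem_map_of_mem hl
    obtain ⟨ρ, hρ, hlen⟩ := exists_hnn_word
      ((psi (Γ'.induce (T : Set V')) ⟨y, hyT⟩).comp φ) φ (p y) r hr hry
      (fun v hv => psi_phi_ne hφ ⟨y, hyT⟩ v hv) u (by
        rintro w₁ u' w₂ b' rfl hfree'
        refine ih u' b' ⟨y, hyT⟩ ?_ ?_ ?_ hfree'
        · have hss : (u'.map Prod.fst).toFinset ⊂
              ((w₁ ++ (p y, b') :: (u' ++ (p y, !b') :: w₂)).map Prod.fst).toFinset := by
            refine Finset.ssubset_iff_subset_ne.2 ⟨?_, ?_⟩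
            · intro z hz
              simp only [List.mem_toFinset, List.mem_map] at hz ⊢
              obtain ⟨a, ha, rfl⟩ := hz
              exact ⟨a, by simp [ha], rfl⟩
            · intro heq
              have : p y ∈ (u'.map Prod.fst).toFinset := by
                rw [heq]; simp
              rw [List.mem_toFinset] at this
              obtain ⟨a, ha, hay⟩ := List.mem_map.1 this
              exact hfree' a ha hay
          have := Finset.card_lt_card hss
          omega
        · intro z hz
          refine hball z ?_
          have : Γ'.dist x z ≤ Γ'.dist x y + Γ'.dist y z := hc.dist_triangle
          simp only at hz
          omega
        · refine reduced_of_subword (w₁ := (p x, b) :: w₁) (w₂ := w₂ ++ [(p x, !b)]) ?_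
          simpa using hred)
    have hnil : ρ.toList = [] := by
      refine ReducedWord.toList_eq_nil_of_mem_of_range (MulEquiv.refl _) ρ ?_
      rw [hρ]
      refine ⟨_, (psi_of_closure (s := {z | z ≠ x ∧ ¬ (Γ'.induce (T : Set V')).Adj x z})
        ?_ hmem).symm⟩
      rintro ⟨-, h⟩
      exact h hxy
    rw [hnil, List.length_nil, eq_comm, List.count_eq_zero, hpy] at hlen
    exact hlen (List.mem_map_of_mem hl)

/-- If `T` contains the ball of radius `|V(Γ)|` around a lift `x` of `v`, every minimal word
for `φ w`, where `w` has minimal length, involves `x` as often as `w` involves `v`. -/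
lemma count_eq (hp : IsGraphCovering Γ' Γ p) (hc : Γ'.Connected)
    (hφ : IsPhi Γ Γ' p T φ) [Fintype V] (x : ↥(T : Set V'))
    (hball : ∀ y, Γ'.dist x y ≤ Fintype.card V → y ∈ T)
    {w : List (V × Bool)} (hw : IsReducedWord Γ w) {W : List (↥(T : Set V') × Bool)}
    (hW : IsReducedWord (Γ'.induce (T : Set V')) W)
    (h : wordProd (Γ'.induce (T : Set V')) W = φ (wordProd Γ w)) :
    (W.map Prod.fst).count x = (w.map Prod.fst).count (p x) := by
  obtain ⟨r, hr, hrx⟩ := psi_phi_self hp hφ x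
  obtain ⟨ρ₁, hρ₁, hlen₁⟩ := exists_hnn_word
    ((psi (Γ'.induce (T : Set V')) x).comp φ) φ (p x) r hr hrx
    (fun v hv => psi_phi_ne hφ x v hv) w (by
      rintro w₁ u w₂ b rfl hfree
      refine phi_notMem_coStar hp hc hφ _ u b x (Finset.card_le_univ _) hball ?_ hfree
      refine reduced_of_subword (w₁ := w₁) (w₂ := w₂) ?_
      simpa using hw)
  obtain ⟨ρ₂, hρ₂, hlen₂⟩ := exists_hnn_word
    (psi (Γ'.induce (T : Set V')) x) (MonoidHom.id _) x 1 (one_mem _)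
    (by simp [psi_self]) (fun v hv => psi_ne hv) W (by
      rintro w₁ u w₂ b rfl -
      exact reduced_notMem_coStar hW)
  have := (ReducedWord.map_fst_eq_and_of_prod_eq (MulEquiv.refl _)
    (hρ₁.trans ((congrArg _ h.symm).trans hρ₂.symm))).1
  have hlen : ρ₁.toList.length = ρ₂.toList.length := by simpa using congrArg List.length this
  rw [← hlen₁, hlen, hlen₂]
  congr!

/-- The lower bound `‖g‖ ≤ ‖φ g‖`, obtained by counting in a minimal word for `φ g` only the
letters from one deep lift of each vertex of `Γ`. -/
lemma raagNorm_le_raagNorm_phi (hp : IsGraphCovering Γ' Γ p) (hc : Γ'.Connected)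
    (hφ : IsPhi Γ Γ' p T φ) [Fintype V]
    (hball : ∀ v, ∃ x, p x = v ∧ ∀ y, Γ'.dist x y ≤ Fintype.card V → y ∈ T) (g : Raag Γ) :
    raagNorm Γ g ≤ raagNorm (Γ'.induce (T : Set V')) (φ g) := by
  obtain ⟨w, rfl, hwl, hw⟩ := exists_reduced_word Γ g
  obtain ⟨W, hW, hWl, hWr⟩ := exists_reduced_word (Γ'.induce (T : Set V')) (φ (wordProd Γ w))
  rw [← hwl, ← hWl]
  choose s hs hsb using hball
  have hsT : ∀ v, s v ∈ T := fun v => hsb v _ (by simp)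
  let s' : V → ↥(T : Set V') := fun v => ⟨s v, hsT v⟩
  have hinj : Function.Injective s' := by
    intro u v huv
    rw [← hs u, ← hs v]
    exact congrArg (fun z : ↥(T : Set V') => p z) huv
  have hcnt : ∀ v, (W.map Prod.fst).count (s' v) = (w.map Prod.fst).count v := by
    intro v
    have := count_eq hp hc hφ (s' v) (hsb v) hw hWr hW
    rwa [show p (s' v) = v from hs v] at this
  have e1 : w.length = ∑ v : V, (w.map Prod.fst).count v := by
    have := Multiset.sum_count_eq_card (s := Finset.univ)
      (m := Multiset.ofList (w.map Prod.fst)) (by simp)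
    simpa using this.symm
  have e2 : W.length = ∑ v : ↥(T : Set V'), (W.map Prod.fst).count v := by
    have := Multiset.sum_count_eq_card (s := Finset.univ)
      (m := Multiset.ofList (W.map Prod.fst)) (by simp)
    simp only [Multiset.coe_count, Multiset.coe_card, List.length_map] at this
    rw [← this]
    congr!
  rw [e1, e2, ← Finset.sum_congr rfl fun v _ => hcnt v,
    ← Finset.sum_image (f := fun z => (W.map Prod.fst).count z)
      (s := Finset.univ) (g := s') (fun _ _ _ _ h => hinj h)]
  exact Finset.sum_le_sum_of_subset (Finset.subset_univ _)

/-- Each generator is sent to a product of at most `|T|` generators. -/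
lemma raagNorm_phi_le (hφ : IsPhi Γ Γ' p T φ) (g : Raag Γ) :
    raagNorm (Γ'.induce (T : Set V')) (φ g) ≤ T.card * raagNorm Γ g := by
  obtain ⟨w, rfl, hwl, -⟩ := exists_reduced_word Γ g
  rw [← hwl]
  clear hwl
  have hprod : wordProd (Γ'.induce (T : Set V')) (homWord p T w) = φ (wordProd Γ w) := by
    induction w with
    | nil => simp [homWord]
    | cons l w ih =>
      rw [homWord, List.flatMap_cons, wordProd_append, ← homWord, ih, wordProd_cons, map_mul]
      congr 1
      split_ifs
      · rw [hφ]; simp [wordProd, Function.comp_def]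
      · rw [map_inv, hφ, List.prod_inv_reverse]; simp [wordProd, Function.comp_def]
  rw [← hprod]
  refine (raagNorm_le_length _ _).trans ?_
  clear hprod
  induction w with
  | nil => simp [homWord]
  | cons l w ih =>
    rw [homWord, List.flatMap_cons, List.length_append, ← homWord, List.length_cons, mul_add,
      mul_one, add_comm]
    refine add_le_add ih ?_
    have := length_liftSubVerts_le (p := p) (T := T) l.1
    split_ifs <;> simpa using this

end Phi

/-! ### Balls in the universal cover -/

section Ball

variable {V' V : Type*} {Γ : SimpleGraph V} {Γ' : SimpleGraph V'} {p : V' → V}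

lemma surjective_of_covering (hp : IsGraphCovering Γ' Γ p) (hΓ : Γ.Connected) [Nonempty V'] :
    Function.Surjective p := by
  intro v
  obtain ⟨b⟩ := ‹Nonempty V'›
  obtain ⟨q⟩ := hΓ.preconnected (p b) v
  have : ∀ (u v : V) (q : Γ.Walk u v) (b : V'), p b = u → ∃ x, p x = v := by
    intro u v q
    induction q with
    | nil => intro b hb; exact ⟨b, hb⟩
    | cons h q ih =>
      intro b hb
      subst hb
      obtain ⟨y, -, hy⟩ := (hp.bijOn b).surjOn h
      exact ih y hy
  exact this _ _ q b rfl

/-- A vertex at distance `n + 1` from `b` has a neighbour at distance at most `n`. -/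
lemma exists_adj_dist_le (hc : Γ'.Connected) {b x : V'} {n : ℕ} (h : Γ'.dist b x = n + 1) :
    ∃ y, Γ'.Adj x y ∧ Γ'.dist b y ≤ n := by
  obtain ⟨q, hq⟩ := hc.exists_walk_length_eq_dist x b
  rw [SimpleGraph.dist_comm, h] at hq
  cases q with
  | nil => simp at hq
  | cons hadj q =>
    refine ⟨_, hadj, ?_⟩
    rw [SimpleGraph.dist_comm]
    refine (SimpleGraph.dist_le q).trans ?_
    simp only [SimpleGraph.Walk.length_cons] at hq
    omega

lemma finite_ball [Finite V] (hp : IsGraphCovering Γ' Γ p) (hc : Γ'.Connected) (b : V') (n : ℕ) :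
    {x | Γ'.dist b x ≤ n}.Finite := by
  induction n with
  | zero =>
    refine (Set.finite_singleton b).subset fun x hx => ?_
    exact (hc.dist_eq_zero_iff.1 (Nat.le_zero.1 hx)).symm
  | succ n ih =>
    have hnb : ∀ y, (Γ'.neighborSet y).Finite := fun y =>
      Set.Finite.of_finite_image (Set.toFinite _) (hp.bijOn y).injOn
    refine (ih.union (ih.biUnion fun y _ => hnb y)).subset fun x hx => ?_
    rcases Nat.lt_or_ge (Γ'.dist b x) (n + 1) with h | h
    · left; exact Nat.lt_succ_iff.1 h
    · right
      obtain ⟨y, hy, hd⟩ := exists_adj_dist_le hc (le_antisymm hx h)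
      exact Set.mem_biUnion (show y ∈ {x | Γ'.dist b x ≤ n} from hd) hy.symm

lemma connected_ball (hc : Γ'.Connected) (b : V') (n : ℕ) (s : Set V')
    (hs : ∀ x, x ∈ s ↔ Γ'.dist b x ≤ n) : (Γ'.induce s).Connected := by
  have hb : b ∈ s := (hs b).2 (by simp)
  have key : ∀ k x (hx : x ∈ s), Γ'.dist b x ≤ k → (Γ'.induce s).Reachable ⟨b, hb⟩ ⟨x, hx⟩ := by
    intro k
    induction k with
    | zero =>
      intro x hx hd
      obtain rfl := hc.dist_eq_zero_iff.1 (Nat.le_zero.1 hd)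
      exact SimpleGraph.Reachable.refl _
    | succ k ih =>
      intro x hx hd
      rcases Nat.lt_or_ge (Γ'.dist b x) (k + 1) with h | h
      · exact ih x hx (Nat.lt_succ_iff.1 h)
      · have heq := le_antisymm hd h
        obtain ⟨y, hy, hdy⟩ := exists_adj_dist_le hc heq
        have hys : y ∈ s := (hs y).2 (by have := (hs x).1 hx; omega)
        refine (ih y hys hdy).trans (SimpleGraph.Adj.reachable ?_)
        exact hy.symm
  have : Nonempty s := ⟨⟨b, hb⟩⟩
  exact ⟨fun x y => (key _ x.1 x.2 le_rfl).symm.trans (key _ y.1 y.2 le_rfl)⟩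

end Ball

end RaagTree

/-- Let `Γ` be a finite connected simple graph and `p : Γ̃ → Γ` a universal
cover, with a fixed linear order on `V(Γ̃)`.  Then there is a finite subtree `T` of `Γ̃` such
that `φ(Γ,T) : G(Γ) → G(T)` is a quasi-isometric group embedding for the word metrics. -/
theorem exists_subtree_phi_qie {V V' : Type} [Fintype V] [DecidableEq V] [LinearOrder V']
    (Γ : SimpleGraph V) (hΓ : Γ.Connected)
    (Γ' : SimpleGraph V') (p : V' → V) (hp : IsUniversalCover Γ' Γ p) :
    ∃ T : Finset V', (Γ'.induce (T : Set V')).IsTree ∧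
      ∃ φ : Raag Γ →* Raag (Γ'.induce (T : Set V')),
        IsPhi Γ Γ' p T φ ∧
        IsQIEmbedding φ (raagDist Γ) (raagDist (Γ'.induce (T : Set V'))) := by
  obtain ⟨hcov, htree⟩ := hp
  have hc : Γ'.Connected := htree.1
  have : Nonempty V' := hc.nonempty
  obtain ⟨b⟩ := this
  have : Nonempty V' := ⟨b⟩
  choose s hs using RaagTree.surjective_of_covering hcov hΓ
  -- a radius for which the ball around `b` contains the ball of radius `|V|` around each `s v`
  let R : ℕ := (∑ v : V, Γ'.dist b (s v)) + Fintype.card V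
  have hfin := RaagTree.finite_ball hcov hc b R
  have hT : ∀ x, x ∈ hfin.toFinset ↔ Γ'.dist b x ≤ R := by simp
  obtain ⟨φ, hφ⟩ := RaagTree.exists_isPhi hcov hfin.toFinset
  have hlow := RaagTree.raagNorm_le_raagNorm_phi hcov hc hφ (fun v => ⟨s v, hs v, fun y hy => by
    rw [hT]
    have h1 : Γ'.dist b y ≤ Γ'.dist b (s v) + Γ'.dist (s v) y := hc.dist_triangle
    have h2 : Γ'.dist b (s v) ≤ ∑ v : V, Γ'.dist b (s v) :=
      Finset.single_le_sum (f := fun v => Γ'.dist b (s v)) (fun _ _ => Nat.zero_le _)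
        (Finset.mem_univ v)
    omega⟩)
  have hup := RaagTree.raagNorm_phi_le hφ
  refine ⟨hfin.toFinset, ⟨RaagTree.connected_ball hc b R _ (by simp),
    htree.2.induce _⟩, φ, hφ, ?_, (hfin.toFinset.card : ℝ) + 1, by simp, ?_⟩
  · rw [injective_iff_map_eq_one]
    intro g hg
    have h0 : raagNorm Γ g ≤ 0 := (hlow g).trans (by
      rw [hg]
      simpa using RaagTree.raagNorm_le_length (Γ'.induce (hfin.toFinset : Set V')) [])
    obtain ⟨w, rfl, hwl, -⟩ := RaagTree.exists_reduced_word Γ g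
    rw [Nat.le_zero.1 h0] at hwl
    rw [List.length_eq_zero_iff.1 hwl, RaagTree.wordProd_nil]
  · intro x y
    have h1 : (raagNorm Γ (y * x⁻¹) : ℝ) ≤ raagNorm _ (φ (y * x⁻¹)) := by
      exact_mod_cast hlow (y * x⁻¹)
    have h2 : (raagNorm _ (φ (y * x⁻¹)) : ℝ) ≤ hfin.toFinset.card * raagNorm Γ (y * x⁻¹) := by
      exact_mod_cast hup (y * x⁻¹)
    have e : raagDist (Γ'.induce (hfin.toFinset : Set V')) (φ x) (φ y)
        = raagNorm _ (φ (y * x⁻¹)) := by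
      simp [raagDist, wordDist, raagNorm]
    have e' : raagDist Γ x y = raagNorm Γ (y * x⁻¹) := rfl
    rw [e, e']
    have hn : (0 : ℝ) ≤ raagNorm Γ (y * x⁻¹) := Nat.cast_nonneg _
    have hcard : (0 : ℝ) ≤ hfin.toFinset.card := Nat.cast_nonneg _
    constructor
    · have : (raagNorm Γ (y * x⁻¹) : ℝ) / (hfin.toFinset.card + 1) ≤ raagNorm Γ (y * x⁻¹) :=
        div_le_self hn (by linarith)
      linarith
    · nlinarith
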